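/- For every integer k ≥ 4 and all reals x_1, x_2 ≥ 0 with x_1 + x_2 ≤ 1, one has C_k(x_1, x_2) ≤ C_{k+1}(x_1, x_2). -/

import Mathlib

/-- The cumulative distribution function `F(z) = min((11/6)z, 1)` of the ICUT scheme. -/
noncomputable def Fcdf (z : ℝ) : ℝ := min ((11 / 6) * z) 1

/-- The probability density `F′(z)`: `11/6` for `z < 6/11` and `0` for `z ≥ 6/11`. -/
noncomputable def Fpdf (z : ℝ) : ℝ := if z < 6 / 11 then 11 / 6 else 0

/-- The density `d_k(x)` with which ICUT cuts an infinitesimal `1,2`-aligned segment at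
`x = (x_1, …, x_k)`:
`d_k(x) = (1/k!) ∑_σ [ F′(x_1) ∏_{i : σ(i) < σ(1)} (1 − F(x_i))
                      + F′(x_2) ∏_{i : σ(i) < σ(2)} (1 − F(x_i)) ]`. -/
noncomputable def dDensity (k : ℕ) (hk : 2 ≤ k) (x : Fin k → ℝ) : ℝ :=
  ((Nat.factorial k : ℝ))⁻¹ *
    ∑ σ : Equiv.Perm (Fin k),
      (Fpdf (x ⟨0, by omega⟩) *
          ∏ i ∈ Finset.univ.filter (fun i => σ i < σ ⟨0, by omega⟩), (1 - Fcdf (x i)) +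
        Fpdf (x ⟨1, by omega⟩) *
          ∏ i ∈ Finset.univ.filter (fun i => σ i < σ ⟨1, by omega⟩), (1 - Fcdf (x i)))

/-- `C_k(x_1, x_2) = d_k(x_1, x_2, c, …, c)` where `c = (1 − x_1 − x_2)/(k − 2)`. -/
noncomputable def Cdensity (k : ℕ) (hk : 3 ≤ k) (x1 x2 : ℝ) : ℝ :=
  dDensity k (by omega)
    (fun i => if (i : ℕ) = 0 then x1 else if (i : ℕ) = 1 then x2
      else (1 - x1 - x2) / ((k : ℝ) - 2))

open Finset in
lemma aux_count {k : ℕ} (j : Fin k) (T : Finset (Fin k)) (hT : T ⊆ univ.erase j) :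
    (T.card + 1) * (univ.filter (fun σ : Equiv.Perm (Fin k) => ∀ i ∈ T, σ i < σ j)).card
      = k.factorial := by
  classical
  have hj : j ∉ T := fun h => by simpa using hT h
  let S := insert j T
  let A : Fin k → Finset (Equiv.Perm (Fin k)) := fun a =>
    univ.filter (fun σ => ∀ i ∈ S, σ i ≤ σ a)
  have hA : univ.filter (fun σ : Equiv.Perm (Fin k) => ∀ i ∈ T, σ i < σ j) = A j := by
    ext σ
    simp only [A, S, mem_filter, mem_univ, true_and, mem_insert, forall_eq_or_imp, le_refl]
    refine forall₂_congr fun i hi => ?_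
    have : i ≠ j := fun h => hj (h ▸ hi)
    have h2 : σ i ≠ σ j := fun h => this (σ.injective h)
    exact ⟨le_of_lt, fun h => lt_of_le_of_ne h h2⟩
  have hcard : ∀ a ∈ S, (A a).card = (A j).card := by
    intro a ha
    have hsw : ∀ i ∈ S, Equiv.swap a j i ∈ S := by
      intro i hi
      rw [Equiv.swap_apply_def]
      split_ifs
      · simp [S]
      · exact ha
      · exact hi
    refine card_bij' (fun σ _ => σ * Equiv.swap a j) (fun σ _ => σ * Equiv.swap a j) ?_ ?_ ?_ ?_
    · intro σ hσ
      simp only [A, mem_filter, mem_univ, true_and, Equiv.Perm.mul_apply,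
        Equiv.swap_apply_right] at hσ ⊢
      exact fun i hi => hσ _ (hsw i hi)
    · intro σ hσ
      simp only [A, mem_filter, mem_univ, true_and, Equiv.Perm.mul_apply,
        Equiv.swap_apply_left] at hσ ⊢
      exact fun i hi => hσ _ (hsw i hi)
    · intro σ _; simp [mul_assoc]
    · intro σ _; simp [mul_assoc]
  have hsum : ∑ a ∈ S, (A a).card = k.factorial := by
    have h1 : ∀ σ : Equiv.Perm (Fin k), (S.filter (fun a => ∀ i ∈ S, σ i ≤ σ a)).card = 1 := by
      intro σ
      obtain ⟨a, ha, hmax⟩ := exists_max_image S σ ⟨j, by simp [S]⟩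
      rw [card_eq_one]
      refine ⟨a, ?_⟩
      ext b
      simp only [mem_filter, mem_singleton]
      constructor
      · rintro ⟨hb, h⟩
        exact σ.injective (le_antisymm (hmax b hb) (h a ha))
      · rintro rfl; exact ⟨ha, hmax⟩
    have h2 : ∑ a ∈ S, (A a).card = ∑ σ : Equiv.Perm (Fin k),
        (S.filter (fun a => ∀ i ∈ S, σ i ≤ σ a)).card := by
      simp only [A, card_filter]
      exact sum_comm
    rw [h2, sum_congr rfl (fun σ _ => h1 σ)]
    simp [Fintype.card_perm]
  rw [hA, ← hsum, sum_congr rfl hcard, sum_const, smul_eq_mul, card_insert_of_notMem hj]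

open Finset in
lemma aux_integral {k : ℕ} (j : Fin k) (f : Fin k → ℝ) :
    ((Nat.factorial k : ℝ))⁻¹ * ∑ σ : Equiv.Perm (Fin k),
      ∏ i ∈ univ.filter (fun i => σ i < σ j), (1 - f i)
      = ∫ t in (0:ℝ)..1, ∏ i ∈ univ.erase j, (1 - t * f i) := by
  classical
  have e1 : ∀ σ : Equiv.Perm (Fin k), ∏ i ∈ univ.filter (fun i => σ i < σ j), (1 - f i)
      = ∑ T ∈ (univ.erase j).powerset, if (∀ i ∈ T, σ i < σ j) then ∏ i ∈ T, (- f i) else 0 := by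
    intro σ
    have : univ.filter (fun i => σ i < σ j) = (univ.erase j).filter (fun i => σ i < σ j) := by
      ext i
      simp only [mem_filter, mem_univ, true_and, mem_erase, and_true]
      exact ⟨fun h => ⟨fun e => by simp [e] at h, h⟩, fun h => h.2⟩
    rw [this, prod_filter]
    have e : ∀ i ∈ univ.erase j, (if σ i < σ j then (1 - f i) else 1)
        = 1 + (if σ i < σ j then - f i else 0) := by
      intro i _; split_ifs <;> ring
    rw [prod_congr rfl e, prod_one_add]
    refine sum_congr rfl fun T _ => ?_
    rw [prod_ite_zero]
    congr
  have e2 : ∀ t : ℝ, ∏ i ∈ univ.erase j, (1 - t * f i)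
      = ∑ T ∈ (univ.erase j).powerset, t ^ T.card * ∏ i ∈ T, (- f i) := by
    intro t
    have e : ∀ i ∈ univ.erase j, (1 - t * f i) = 1 + t * (- f i) := by
      intro i _; ring
    rw [prod_congr rfl e, prod_one_add]
    refine sum_congr rfl fun T _ => ?_
    rw [prod_mul_distrib, prod_const]
  simp only [e1, e2]
  rw [sum_comm, mul_sum, intervalIntegral.integral_finsetSum]
  · refine sum_congr rfl fun T hT => ?_
    have hc := aux_count j T (mem_powerset.1 hT)
    rw [← sum_filter, sum_const, nsmul_eq_mul, intervalIntegral.integral_mul_const, integral_pow,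
      ← hc]
    have h0 := Nat.factorial_ne_zero k
    rw [← hc] at h0
    have h3 : ((univ.filter (fun σ : Equiv.Perm (Fin k) => ∀ i ∈ T, σ i < σ j)).card : ℝ) ≠ 0 := by
      have := (mul_ne_zero_iff.1 h0).2
      exact_mod_cast this
    have h4 : (T.card : ℝ) + 1 ≠ 0 := by positivity
    push_cast
    generalize ((univ.filter (fun σ : Equiv.Perm (Fin k) => ∀ i ∈ T, σ i < σ j)).card : ℝ) = N at *
    field_simp
    simp
  · intro T _
    exact Continuous.intervalIntegrable (by fun_prop) _ _

lemma aux_pow (n : ℕ) (hn : 0 < n) (y : ℝ) (hy0 : 0 ≤ y) (hy : y ≤ n) :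
    (1 - y / n) ^ n ≤ (1 - y / ((n:ℝ) + 1)) ^ (n + 1) := by
  have hn' : (0:ℝ) < n := by exact_mod_cast hn
  have hq : 0 ≤ 1 - y / ((n:ℝ) + 1) := by
    rw [sub_nonneg, div_le_one (by positivity)]; linarith
  rcases hy.eq_or_lt with h | h
  · rw [h, div_self hn'.ne', sub_self, zero_pow hn.ne']
    rw [h] at hq; positivity
  · have hp : 0 < 1 - y / n := by rw [sub_pos, div_lt_one hn']; exact h
    set p := 1 - y / n with hpd
    have hyp : y = n * (1 - p) := by rw [hpd]; field_simp; ring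
    have hp1 : p ≤ 1 := by rw [hpd]; have : 0 ≤ y / n := by positivity
                           linarith
    have hb := one_add_mul_le_pow (a := (1 - p) / (((n:ℝ) + 1) * p))
      (by have : 0 ≤ (1 - p) / (((n:ℝ) + 1) * p) := div_nonneg (by linarith) (by positivity)
          linarith) (n + 1)
    have e1 : 1 + ((n + 1 : ℕ) : ℝ) * ((1 - p) / (((n:ℝ) + 1) * p)) = 1 / p := by
      push_cast; field_simp; ring
    have e2 : 1 - y / ((n:ℝ) + 1) = p * (1 + (1 - p) / (((n:ℝ) + 1) * p)) := by
      rw [hyp]; field_simp; ring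
    rw [e1] at hb
    rw [e2, mul_pow]
    calc p ^ n = p ^ (n + 1) * (1 / p) := by rw [pow_succ]; field_simp
      _ ≤ _ := mul_le_mul_of_nonneg_left hb (by positivity)

open Finset in
lemma aux_C (k : ℕ) (hk3 : 3 ≤ k) (hk : 4 ≤ k) (x1 x2 : ℝ) (h1 : 0 ≤ x1) (h2 : 0 ≤ x2) :
    Cdensity k hk3 x1 x2 =
      Fpdf x1 * (∫ t in (0:ℝ)..1, (1 - t * Fcdf x2) *
        (1 - t * (11 / 6 * (1 - x1 - x2)) / ((k - 2 : ℕ) : ℝ)) ^ (k - 2)) +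
      Fpdf x2 * (∫ t in (0:ℝ)..1, (1 - t * Fcdf x1) *
        (1 - t * (11 / 6 * (1 - x1 - x2)) / ((k - 2 : ℕ) : ℝ)) ^ (k - 2)) := by
  have hk2 : ((k - 2 : ℕ) : ℝ) = (k : ℝ) - 2 := by rw [Nat.cast_sub (by omega)]; norm_num
  have hkr : (4:ℝ) ≤ k := by exact_mod_cast hk
  have hF : Fcdf ((1 - x1 - x2) / ((k : ℝ) - 2)) = 11 / 6 * ((1 - x1 - x2) / ((k : ℝ) - 2)) := by
    rw [Fcdf, min_eq_left]
    have : (1 - x1 - x2) / ((k : ℝ) - 2) ≤ 1 / 2 := by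
      rw [div_le_div_iff₀ (by linarith) (by norm_num)]; linarith
    linarith
  have key : ∀ (j j' : Fin k) (v : ℝ), j ≠ j' → (j : ℕ) ≤ 1 → (j' : ℕ) ≤ 1 →
      ∀ t : ℝ, ∏ i ∈ univ.erase j, (1 - t * Fcdf (if (i : ℕ) = 0 then x1 else
        if (i : ℕ) = 1 then x2 else (1 - x1 - x2) / ((k : ℝ) - 2))) =
      (1 - t * Fcdf (if (j' : ℕ) = 0 then x1 else
        if (j' : ℕ) = 1 then x2 else (1 - x1 - x2) / ((k : ℝ) - 2))) *
        (1 - t * (11 / 6 * (1 - x1 - x2)) / ((k - 2 : ℕ) : ℝ)) ^ (k - 2) := by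
    intro j j' v hne hj hj' t
    have hm : j' ∈ univ.erase j := by simp [hne.symm]
    rw [← mul_prod_erase _ _ hm]
    congr 1
    rw [prod_congr rfl (g := fun _ => 1 - t * (11 / 6 * (1 - x1 - x2)) / ((k - 2 : ℕ) : ℝ)),
      prod_const, card_erase_of_mem hm, card_erase_of_mem (mem_univ _)]
    · simp [Nat.sub_sub]
    · intro i hi
      simp only [mem_erase, mem_univ, and_true] at hi
      have a1 : (i : ℕ) ≠ j' := fun h => hi.1 (Fin.ext h)
      have a2 : (i : ℕ) ≠ j := fun h => hi.2 (Fin.ext h)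
      have a3 : (j : ℕ) ≠ j' := fun h => hne (Fin.ext h)
      rw [if_neg (by omega), if_neg (by omega), hF, hk2]
      ring
  unfold Cdensity dDensity
  rw [sum_add_distrib, ← mul_sum, ← mul_sum, mul_add, mul_left_comm, mul_left_comm (_⁻¹)]
  rw [aux_integral ⟨0, by omega⟩ (fun i : Fin k => Fcdf (if (i : ℕ) = 0 then x1 else
        if (i : ℕ) = 1 then x2 else (1 - x1 - x2) / ((k : ℝ) - 2))),
    aux_integral ⟨1, by omega⟩ (fun i : Fin k => Fcdf (if (i : ℕ) = 0 then x1 else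
        if (i : ℕ) = 1 then x2 else (1 - x1 - x2) / ((k : ℝ) - 2)))]
  simp only [key ⟨0, by omega⟩ ⟨1, by omega⟩ 0 (by simp) (by simp) (by simp),
    key ⟨1, by omega⟩ ⟨0, by omega⟩ 0 (by simp) (by simp) (by simp)]
  simp

/-- for `k ≥ 4`, `C_k(x_1, x_2) ≤ C_{k+1}(x_1, x_2)`. -/
theorem Cdensity_mono (k : ℕ) (hk : 4 ≤ k) (x1 x2 : ℝ) (h1 : 0 ≤ x1) (h2 : 0 ≤ x2)
    (h12 : x1 + x2 ≤ 1) :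
    Cdensity k (by omega) x1 x2 ≤ Cdensity (k + 1) (by omega) x1 x2 := by
  rw [aux_C k _ hk x1 x2 h1 h2, aux_C (k + 1) _ (by omega) x1 x2 h1 h2]
  have hpdf : ∀ z, 0 ≤ Fpdf z := by
    intro z; unfold Fpdf; split_ifs <;> norm_num
  have hint : ∀ z : ℝ, (∫ t in (0:ℝ)..1, (1 - t * Fcdf z) *
        (1 - t * (11 / 6 * (1 - x1 - x2)) / ((k - 2 : ℕ) : ℝ)) ^ (k - 2)) ≤
      (∫ t in (0:ℝ)..1, (1 - t * Fcdf z) *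
        (1 - t * (11 / 6 * (1 - x1 - x2)) / ((k + 1 - 2 : ℕ) : ℝ)) ^ (k + 1 - 2)) := by
    intro z
    apply intervalIntegral.integral_mono_on (by norm_num)
    · exact Continuous.intervalIntegrable (by fun_prop) _ _
    · exact Continuous.intervalIntegrable (by fun_prop) _ _
    · rintro t ⟨ht0, ht1⟩
      have hF1 : Fcdf z ≤ 1 := min_le_right _ _
      apply mul_le_mul_of_nonneg_left
      · have e : k + 1 - 2 = (k - 2) + 1 := by omega
        have hn : (2:ℝ) ≤ ((k - 2 : ℕ) : ℝ) := by exact_mod_cast (by omega : 2 ≤ k - 2)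
        rw [e]
        push_cast
        apply aux_pow _ (by omega)
        · apply mul_nonneg ht0; linarith
        · nlinarith
      · nlinarith
  exact add_le_add (mul_le_mul_of_nonneg_left (hint _) (hpdf _))
    (mul_le_mul_of_nonneg_left (hint _) (hpdf _))
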